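/- arXiv:1612.02905 — 2 statements merged into one kernel-verified Lean document; each statement's English description precedes it below -/
import Mathlib

section
/- If two points p, q ∈ ℝ³ have equal third coordinates (p₃ = q₃), then the geodesic distance equals the Euclidean distance: d_g(p, q) = ‖p − q‖. -/
open Real MeasureTheory

noncomputable section

/-- `ℝ³` with the Euclidean norm. -/
abbrev E3 : Type := EuclideanSpace ℝ (Fin 3)

/-- The bump function `f(y) = A (1 + cos (π y))`. -/
def f (A y : ℝ) : ℝ := A * (1 + Real.cos (Real.pi * y))

/-- The g-length of a path `γ` in the perturbed metric:
`L_g(γ) = ∫₀¹ √(γ₁′(t)² + γ₂′(t)² + (1 + f(γ₂(t))) γ₃′(t)²) dt`. -/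
def Lg (A : ℝ) (γ : ℝ → E3) : ℝ :=
  ∫ t in (0:ℝ)..1,
    Real.sqrt ((deriv γ t 0) ^ 2 + (deriv γ t 1) ^ 2
      + (1 + f A (γ t 1)) * (deriv γ t 2) ^ 2)

/-- The geodesic distance: the infimum of g-lengths of C¹ paths from `p` to `q`. -/
def dg (A : ℝ) (p q : E3) : ℝ :=
  sInf {L : ℝ | ∃ γ : ℝ → E3,
    ContDiff ℝ 1 γ ∧ γ 0 = p ∧ γ 1 = q ∧ L = Lg A γ}

/-- A point of `ℝ³` from its three coordinates. -/
def pt (x y z : ℝ) : E3 := (EuclideanSpace.equiv (Fin 3) ℝ).symm ![x, y, z]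

/-- `a = 1/√2`. -/
def a : ℝ := 1 / Real.sqrt 2

/-- `ξ₀ = √(1 + f(0)) − 1`. -/
def ξ₀ (A : ℝ) : ℝ := Real.sqrt (1 + f A 0) - 1

/-!
The third coordinate enters the metric `g` only through the term `(1 + f) γ₃′²`, which is
nonnegative as soon as `-1/2 ≤ A`. Forgetting the third coordinate therefore does not increase
lengths, so `dg` dominates the Euclidean distance of the projections to the plane. When `p₃ = q₃`
this bound is `‖p - q‖`, and the straight segment, which stays in a horizontal plane, attains it.
-/

/-- The norm which the metric `g` puts on the tangent space at `x`, so that the `g`-length of a path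
is the integral of the `g`-norm of its velocity. -/
def gNorm (A : ℝ) (x v : E3) : ℝ :=
  √(v 0 ^ 2 + v 1 ^ 2 + (1 + f A (x 1)) * v 2 ^ 2)

/-- The orthogonal projection of `ℝ³` onto its first two coordinates, with values in the Euclidean
plane. -/
def planeProj : E3 →L[ℝ] EuclideanSpace ℝ (Fin 2) :=
  (EuclideanSpace.equiv (Fin 2) ℝ).symm ∘L
    ContinuousLinearMap.pi ![EuclideanSpace.proj 0, EuclideanSpace.proj 1]

lemma norm_planeProj (v : E3) : ‖planeProj v‖ = √(v 0 ^ 2 + v 1 ^ 2) := by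
  simp [EuclideanSpace.norm_eq, planeProj]

lemma norm_planeProj_of_apply_two_eq_zero {v : E3} (hv : v 2 = 0) : ‖planeProj v‖ = ‖v‖ := by
  rw [norm_planeProj]
  simp [EuclideanSpace.norm_eq, Fin.sum_univ_three, hv]

@[fun_prop]
lemma continuous_f (A : ℝ) : Continuous (f A) := by
  unfold f
  fun_prop

lemma one_add_f_nonneg {A : ℝ} (hA : -1 / 2 ≤ A) (y : ℝ) : 0 ≤ 1 + f A y := by
  have hcos : 0 ≤ 1 + cos (π * y) := by linarith [neg_one_le_cos (π * y)]
  calc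
    0 ≤ 1 + -1 / 2 * (1 + cos (π * y)) := by linarith [cos_le_one (π * y)]
    _ ≤ 1 + f A y := by
      unfold f
      gcongr

lemma Lg_eq_integral_gNorm (A : ℝ) (γ : ℝ → E3) :
    Lg A γ = ∫ t in (0 : ℝ)..1, gNorm A (γ t) (deriv γ t) :=
  rfl

lemma norm_planeProj_le_gNorm {A : ℝ} (hA : -1 / 2 ≤ A) (x v : E3) :
    ‖planeProj v‖ ≤ gNorm A x v := by
  rw [norm_planeProj]
  exact sqrt_le_sqrt <| le_add_of_nonneg_right <|
    mul_nonneg (one_add_f_nonneg hA (x 1)) (sq_nonneg (v 2))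

lemma gNorm_of_apply_two_eq_zero (A : ℝ) (x : E3) {v : E3} (hv : v 2 = 0) :
    gNorm A x v = ‖v‖ := by
  simp [gNorm, EuclideanSpace.norm_eq, Fin.sum_univ_three, hv]

lemma continuous_gNorm_deriv (A : ℝ) {γ : ℝ → E3} (hγ : ContDiff ℝ 1 γ) :
    Continuous fun t ↦ gNorm A (γ t) (deriv γ t) := by
  have := hγ.continuous_deriv_one
  unfold gNorm
  fun_prop

lemma Lg_nonneg (A : ℝ) (γ : ℝ → E3) : 0 ≤ Lg A γ :=
  intervalIntegral.integral_nonneg zero_le_one fun _ _ ↦ sqrt_nonneg _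

lemma norm_planeProj_sub_le_Lg {A : ℝ} (hA : -1 / 2 ≤ A) {γ : ℝ → E3} (hγ : ContDiff ℝ 1 γ) :
    ‖planeProj (γ 0 - γ 1)‖ ≤ Lg A γ := by
  have hderiv (t : ℝ) : HasDerivAt (planeProj ∘ γ) (planeProj (deriv γ t)) t :=
    planeProj.hasFDerivAt.comp_hasDerivAt t (hγ.differentiable_one t).hasDerivAt
  rw [map_sub, norm_sub_rev, Lg_eq_integral_gNorm]
  refine norm_sub_le_integral_of_norm_deriv_le_of_le (f := planeProj ∘ γ) zero_le_one
    (planeProj.continuous.comp hγ.continuous).continuousOn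
    (fun t _ ↦ (hderiv t).differentiableAt.differentiableWithinAt) (.of_forall fun t _ ↦ ?_)
    ((continuous_gNorm_deriv A hγ).intervalIntegrable 0 1)
  rw [(hderiv t).deriv]
  exact norm_planeProj_le_gNorm hA (γ t) (deriv γ t)

lemma Lg_lineMap_of_apply_two_eq (A : ℝ) {p q : E3} (h : p 2 = q 2) :
    Lg A (AffineMap.lineMap p q) = ‖p - q‖ := by
  have hv : (q - p) 2 = 0 := by simp [h]
  simp [Lg_eq_integral_gNorm, AffineMap.hasDerivAt_lineMap.deriv,
    gNorm_of_apply_two_eq_zero A _ hv, norm_sub_rev]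

lemma dg_le_Lg (A : ℝ) {γ : ℝ → E3} (hγ : ContDiff ℝ 1 γ) : dg A (γ 0) (γ 1) ≤ Lg A γ := by
  refine csInf_le ⟨0, ?_⟩ ⟨γ, hγ, rfl, rfl, rfl⟩
  rintro _ ⟨η, -, -, -, rfl⟩
  exact Lg_nonneg A η

lemma dg_le_norm_sub_of_apply_two_eq (A : ℝ) {p q : E3} (h : p 2 = q 2) :
    dg A p q ≤ ‖p - q‖ := by
  simpa [Lg_lineMap_of_apply_two_eq A h] using dg_le_Lg A (AffineMap.contDiff_lineMap p q)

lemma norm_planeProj_sub_le_dg {A : ℝ} (hA : -1 / 2 ≤ A) (p q : E3) :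
    ‖planeProj (p - q)‖ ≤ dg A p q := by
  refine le_csInf ⟨_, AffineMap.lineMap p q, AffineMap.contDiff_lineMap p q,
    by simp, by simp, rfl⟩ ?_
  rintro _ ⟨γ, hγ, rfl, rfl, rfl⟩
  exact norm_planeProj_sub_le_Lg hA hγ

theorem dg_eq_euclidean_of_equal_z_general {A : ℝ} (hA : -1 / 2 ≤ A) {p q : E3} (h : p 2 = q 2) :
    dg A p q = ‖p - q‖ := by
  refine (dg_le_norm_sub_of_apply_two_eq A h).antisymm ?_
  have hv : (p - q) 2 = 0 := by simp [h]
  simpa only [norm_planeProj_of_apply_two_eq_zero hv] using norm_planeProj_sub_le_dg hA p q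

/-- If `p₃ = q₃` then the geodesic distance equals the Euclidean distance. -/
theorem dg_eq_euclidean_of_equal_z (A : ℝ) (hA0 : 0 < A) (hA : A ≤ 3 / 8)
    (p q : E3) (h : p 2 = q 2) :
    dg A p q = ‖p - q‖ :=
  dg_eq_euclidean_of_equal_z_general (by linarith) h
end
end

section
/- There exists ε₀ > 0 such that for all ε with 0 < ε < ε₀, the points u = (0, 0, aε) and v = (0, 0, −aε) satisfy d_g(v, u) = 2aε√(1 + f(0)); that is, for sufficiently small ε the straight segment along the z-axis is a minimising path between v and u. -/
open Real MeasureTheory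

noncomputable section

open Filter Topology

/-! The upper bound is the `g`-length of the segment. For the lower bound, suppose that `γ` joins
`(0, 0, -m)` to `(0, 0, m)` and is shorter than the segment. Then `γ` stays close to the origin.
There, with `c = √(1 + f(0))` and `κ` such that `f(y) ≥ f(0) - c κ y²`, the function `c z - κ z y²`
has `g`-gradient of norm at most `1`: lowering its `z`-derivative by `κ y²` compensates the drop of
`f` away from `y = 0`, and its `y`-derivative `-2 κ z y` is of higher order near the origin. Hence
the `g`-length of `γ` is at least the variation `2 m c` of this function between the endpoints. -/

/-- The speed of `γ` in the warped metric `dx² + dy² + G(y) dz²` on `ℝ³`, meaningful for `G ≥ 0`.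
The metric `g` is the case `G = 1 + f`. -/
def warpedSpeed (G : ℝ → ℝ) (γ : ℝ → E3) (t : ℝ) : ℝ :=
  √((deriv γ t 0) ^ 2 + (deriv γ t 1) ^ 2 + G (γ t 1) * (deriv γ t 2) ^ 2)

/-- The length of the path `γ` on `[0, 1]` in the warped metric `dx² + dy² + G(y) dz²`. -/
def warpedLength (G : ℝ → ℝ) (γ : ℝ → E3) : ℝ := ∫ t in (0 : ℝ)..1, warpedSpeed G γ t

/-- The geodesic distance of the warped metric `dx² + dy² + G(y) dz²`, over `C¹` paths. -/
def warpedDist (G : ℝ → ℝ) (p q : E3) : ℝ :=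
  sInf {L : ℝ | ∃ γ : ℝ → E3, ContDiff ℝ 1 γ ∧ γ 0 = p ∧ γ 1 = q ∧ L = warpedLength G γ}

/-- The potential calibrating the `z`-axis near the origin. It does not depend on `x`. -/
def calibration (c κ y z : ℝ) : ℝ := c * z - κ * z * y ^ 2

theorem hasDerivAt_euclidean_apply {n : ℕ} {γ : ℝ → EuclideanSpace ℝ (Fin n)}
    {γ' : EuclideanSpace ℝ (Fin n)} {t : ℝ} (h : HasDerivAt γ γ' t) (i : Fin n) :
    HasDerivAt (fun s ↦ γ s i) (γ' i) t :=
  (EuclideanSpace.proj (𝕜 := ℝ) i).hasFDerivAt.comp_hasDerivAt t h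

section Length

variable {G : ℝ → ℝ} {γ : ℝ → E3}

theorem continuous_warpedSpeed (hG : Continuous G) (hγ : ContDiff ℝ 1 γ) :
    Continuous (warpedSpeed G γ) := by
  have := hγ.continuous
  have := hγ.continuous_deriv_one
  unfold warpedSpeed
  fun_prop

theorem norm_sub_le_warpedLength {E : Type*} [NormedAddCommGroup E] [NormedSpace ℝ E]
    {h h' : ℝ → E} (hG : Continuous G) (hγ : ContDiff ℝ 1 γ)
    (hh : ∀ s, HasDerivAt h (h' s) s)
    (hle : ∀ s ∈ Set.Icc (0 : ℝ) 1, ‖h' s‖ ≤ warpedSpeed G γ s)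
    {t : ℝ} (ht : t ∈ Set.Icc (0 : ℝ) 1) : ‖h t - h 0‖ ≤ warpedLength G γ := by
  have hdiff : Differentiable ℝ h := fun s ↦ (hh s).differentiableAt
  have hint (u v : ℝ) : IntervalIntegrable (warpedSpeed G γ) volume u v :=
    (continuous_warpedSpeed hG hγ).intervalIntegrable u v
  calc ‖h t - h 0‖ ≤ ∫ s in (0 : ℝ)..t, warpedSpeed G γ s := by
        refine norm_sub_le_integral_of_norm_deriv_le_of_le ht.1 hdiff.continuous.continuousOn
          hdiff.differentiableOn (.of_forall fun s hs ↦ ?_) (hint 0 t)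
        rw [(hh s).deriv]
        exact hle s ⟨hs.1.le, hs.2.le.trans ht.2⟩
    _ ≤ warpedLength G γ :=
        intervalIntegral.integral_mono_interval le_rfl ht.1 ht.2
          (.of_forall fun _ ↦ Real.sqrt_nonneg _) (hint 0 1)

theorem abs_sub_apply_one_le_warpedLength (hG : Continuous G) (hG0 : ∀ y, 0 ≤ G y)
    (hγ : ContDiff ℝ 1 γ) {t : ℝ} (ht : t ∈ Set.Icc (0 : ℝ) 1) :
    |γ t 1 - γ 0 1| ≤ warpedLength G γ := by
  refine norm_sub_le_warpedLength hG hγ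
    (fun s ↦ hasDerivAt_euclidean_apply (hγ.differentiable_one s).hasDerivAt 1)
    (fun s _ ↦ Real.abs_le_sqrt ?_) ht
  have hz := mul_nonneg (hG0 (γ s 1)) (sq_nonneg (deriv γ s 2))
  linarith [sq_nonneg (deriv γ s 0)]

theorem sqrt_mul_abs_sub_apply_two_le_warpedLength (hG : Continuous G) {δ : ℝ} (hδ : 0 ≤ δ)
    (hGδ : ∀ y, δ ≤ G y) (hγ : ContDiff ℝ 1 γ) {t : ℝ} (ht : t ∈ Set.Icc (0 : ℝ) 1) :
    √δ * |γ t 2 - γ 0 2| ≤ warpedLength G γ := by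
  have hle : ∀ s ∈ Set.Icc (0 : ℝ) 1, ‖√δ * deriv γ s 2‖ ≤ warpedSpeed G γ s := by
    refine fun s _ ↦ Real.abs_le_sqrt ?_
    rw [mul_pow, Real.sq_sqrt hδ]
    have hz := mul_le_mul_of_nonneg_right (hGδ (γ s 1)) (sq_nonneg (deriv γ s 2))
    linarith [sq_nonneg (deriv γ s 0), sq_nonneg (deriv γ s 1)]
  have hvar := norm_sub_le_warpedLength hG hγ (fun s ↦
    (hasDerivAt_euclidean_apply (hγ.differentiable_one s).hasDerivAt 2).const_mul √δ) hle ht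
  rwa [← mul_sub, norm_mul, Real.norm_of_nonneg (Real.sqrt_nonneg δ)] at hvar

theorem warpedLength_lineMap_vertical (G : ℝ → ℝ) (x y z z' : ℝ) :
    warpedLength G (AffineMap.lineMap (pt x y z) (pt x y z')) = |z' - z| * √(G y) := by
  have hspeed (t : ℝ) :
      warpedSpeed G (AffineMap.lineMap (pt x y z) (pt x y z')) t = |z' - z| * √(G y) := by
    rw [warpedSpeed, AffineMap.hasDerivAt_lineMap.deriv, mul_comm |z' - z|, ← Real.sqrt_sq_eq_abs,
      ← Real.sqrt_mul' _ (sq_nonneg _)]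
    simp [pt, AffineMap.lineMap_apply]
  simp [warpedLength, hspeed]

end Length

section Calibration

variable {c κ : ℝ}

theorem hasDerivAt_calibration {y z : ℝ → ℝ} {y' z' t : ℝ} (hy : HasDerivAt y y' t)
    (hz : HasDerivAt z z' t) :
    HasDerivAt (fun s ↦ calibration c κ (y s) (z s))
      ((c - κ * y t ^ 2) * z' - 2 * κ * z t * y t * y') t := by
  refine ((hz.const_mul c).sub ((hz.const_mul κ).mul (hy.pow 2))).congr_deriv ?_
  simp only [Nat.cast_ofNat, Nat.add_one_sub_one, pow_one, Pi.pow_apply]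
  ring

theorem abs_sub_mul_le_sqrt {b d w : ℝ} (hw : 0 < w) (h : d ^ 2 * w + b ^ 2 ≤ w) (p q r : ℝ) :
    |b * r - d * q| ≤ √(p ^ 2 + q ^ 2 + w * r ^ 2) := by
  have hscaled : w * (b * r - d * q) ^ 2 ≤ w * (q ^ 2 + w * r ^ 2) := calc
    w * (b * r - d * q) ^ 2 ≤ (d ^ 2 * w + b ^ 2) * (q ^ 2 + w * r ^ 2) := by
      linear_combination sq_nonneg (q * b + w * r * d)
    _ ≤ w * (q ^ 2 + w * r ^ 2) := by gcongr
  refine Real.abs_le_sqrt ?_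
  linarith [le_of_mul_le_mul_left hscaled hw, sq_nonneg p]

/-- For `w = G(y) > 0` this says that the gradient of `calibration c κ` in the warped metric has
norm at most `1` at `(x, y, z)`. -/
theorem calibration_gradient_le {w y z : ℝ} (hc : 0 < c) (hκ : 0 ≤ κ)
    (hsmall : κ * (4 * c ^ 2 * z ^ 2 + y ^ 2) ≤ c) (hw : c ^ 2 - c * κ * y ^ 2 ≤ w) :
    (2 * κ * z * y) ^ 2 * w + (c - κ * y ^ 2) ^ 2 ≤ w := by
  have hd : (2 * κ * z * y) ^ 2 ≤ 1 := by
    have hadd := mul_nonneg hκ (sq_nonneg (2 * c * z + y))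
    have hsub := mul_nonneg hκ (sq_nonneg (2 * c * z - y))
    rw [sq_le_one_iff_abs_le_one, abs_le]
    constructor <;> refine le_of_mul_le_mul_left ?_ hc <;> linarith
  have hcritical : (2 * κ * z * y) ^ 2 * (c ^ 2 - c * κ * y ^ 2) + (c - κ * y ^ 2) ^ 2
      ≤ c ^ 2 - c * κ * y ^ 2 := by
    have hslack : 0 ≤ κ * y ^ 2 * (c - κ * (4 * c ^ 2 * z ^ 2 + y ^ 2)) :=
      mul_nonneg (by positivity) (sub_nonneg.2 hsmall)
    have hquad : 0 ≤ (2 * κ * z * y) ^ 2 * (c * κ * y ^ 2) := by positivity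
    linarith
  linarith [mul_le_mul_of_nonneg_right hd (sub_nonneg.2 hw)]

theorem abs_calibration_sub_le_warpedLength {G : ℝ → ℝ} {γ : ℝ → E3} (hG : Continuous G)
    (hG0 : ∀ y, 0 < G y) (hc : 0 < c) (hκ : 0 ≤ κ)
    (hGκ : ∀ y, c ^ 2 - c * κ * y ^ 2 ≤ G y) (hγ : ContDiff ℝ 1 γ)
    (hsmall : ∀ t ∈ Set.Icc (0 : ℝ) 1, κ * (4 * c ^ 2 * γ t 2 ^ 2 + γ t 1 ^ 2) ≤ c) :
    |calibration c κ (γ 1 1) (γ 1 2) - calibration c κ (γ 0 1) (γ 0 2)| ≤ warpedLength G γ := by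
  have hcoord (i : Fin 3) (t : ℝ) : HasDerivAt (fun s ↦ γ s i) (deriv γ t i) t :=
    hasDerivAt_euclidean_apply (hγ.differentiable_one t).hasDerivAt i
  exact norm_sub_le_warpedLength (h := fun s ↦ calibration c κ (γ s 1) (γ s 2)) hG hγ
    (fun s ↦ hasDerivAt_calibration (hcoord 1 s) (hcoord 2 s))
    (fun s hs ↦ abs_sub_mul_le_sqrt (hG0 _)
      (calibration_gradient_le hc hκ (hsmall s hs) (hGκ _)) _ _ _)
    (Set.right_mem_Icc.2 zero_le_one)

end Calibration

section Distance

variable {G : ℝ → ℝ} {δ k m : ℝ}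

theorem mul_sq_add_sq_le_of_abs_le {c L y z : ℝ} (hδ : 0 < δ) (hδc : δ ≤ c ^ 2) (hk : 0 ≤ k)
    (hkm : 44 * k * c ^ 2 * m ^ 2 ≤ δ) (hL : L ≤ 2 * m * c) (hy : |y| ≤ L)
    (hz : √δ * |z + m| ≤ L) : k * (4 * c ^ 2 * z ^ 2 + y ^ 2) ≤ c ^ 2 := by
  have hL2 : L ^ 2 ≤ 4 * c ^ 2 * m ^ 2 := by
    linarith [pow_le_pow_left₀ ((abs_nonneg y).trans hy) hL 2]
  have hy2 : y ^ 2 ≤ 4 * c ^ 2 * m ^ 2 :=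
    (sq_le_sq.2 (hy.trans (le_abs_self L))).trans hL2
  have hzm : δ * (z + m) ^ 2 ≤ 4 * c ^ 2 * m ^ 2 := by
    have hsq := pow_le_pow_left₀ (by positivity) hz 2
    rw [mul_pow, Real.sq_sqrt hδ.le, sq_abs] at hsq
    exact hsq.trans hL2
  have hz2 : δ * z ^ 2 ≤ 10 * c ^ 2 * m ^ 2 := by
    have hm := mul_le_mul_of_nonneg_right hδc (sq_nonneg m)
    linarith [mul_nonneg hδ.le (sq_nonneg (z + 2 * m))]
  refine le_of_mul_le_mul_left ?_ hδ
  calc δ * (k * (4 * c ^ 2 * z ^ 2 + y ^ 2))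
      = k * (4 * c ^ 2 * (δ * z ^ 2) + δ * y ^ 2) := by ring
    _ ≤ k * (4 * c ^ 2 * (10 * c ^ 2 * m ^ 2) + c ^ 2 * (4 * c ^ 2 * m ^ 2)) := by gcongr
    _ = 44 * k * c ^ 2 * m ^ 2 * c ^ 2 := by ring
    _ ≤ δ * c ^ 2 := by gcongr

theorem two_mul_sqrt_le_warpedLength {γ : ℝ → E3} (hG : Continuous G) (hδ : 0 < δ)
    (hGδ : ∀ y, δ ≤ G y) (hk : 0 ≤ k) (hGk : ∀ y, G 0 - k * y ^ 2 ≤ G y)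
    (hkm : 44 * k * G 0 * m ^ 2 ≤ δ) (hγ : ContDiff ℝ 1 γ) (hy₀ : γ 0 1 = 0)
    (hz₀ : γ 0 2 = -m) (hy₁ : γ 1 1 = 0) (hz₁ : γ 1 2 = m) :
    2 * m * √(G 0) ≤ warpedLength G γ := by
  have hGpos (y : ℝ) : 0 < G y := hδ.trans_le (hGδ y)
  set c := √(G 0)
  have hc : 0 < c := Real.sqrt_pos.2 (hGpos 0)
  have hcsq : c ^ 2 = G 0 := Real.sq_sqrt (hGpos 0).le
  have hcκ : c * (k / c) = k := mul_div_cancel₀ k hc.ne'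
  rw [← hcsq] at hGk hkm
  by_contra! hshort
  have hsmall : ∀ t ∈ Set.Icc (0 : ℝ) 1,
      k / c * (4 * c ^ 2 * γ t 2 ^ 2 + γ t 1 ^ 2) ≤ c := by
    intro t ht
    have hy : |γ t 1| ≤ warpedLength G γ := by
      simpa [hy₀] using abs_sub_apply_one_le_warpedLength hG (fun y ↦ (hGpos y).le) hγ ht
    have hz : √δ * |γ t 2 + m| ≤ warpedLength G γ := by
      simpa [hz₀] using sqrt_mul_abs_sub_apply_two_le_warpedLength hG hδ.le hGδ hγ ht
    rw [div_mul_eq_mul_div, div_le_iff₀ hc, ← sq]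
    exact mul_sq_add_sq_le_of_abs_le hδ (hcsq ▸ hGδ 0) hk hkm hshort.le hy hz
  have hcal := abs_calibration_sub_le_warpedLength hG hGpos hc (div_nonneg hk hc.le)
    (by rwa [hcκ]) hγ hsmall
  simp only [calibration, hy₀, hy₁, hz₀, hz₁] at hcal
  linarith [(le_abs_self _).trans hcal]

theorem warpedDist_vertical_eq (hG : Continuous G) (hδ : 0 < δ) (hGδ : ∀ y, δ ≤ G y)
    (hk : 0 ≤ k) (hGk : ∀ y, G 0 - k * y ^ 2 ≤ G y) (hm : 0 ≤ m)
    (hkm : 44 * k * G 0 * m ^ 2 ≤ δ) :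
    warpedDist G (pt 0 0 (-m)) (pt 0 0 m) = 2 * m * √(G 0) := by
  refine IsLeast.csInf_eq ⟨⟨AffineMap.lineMap (pt 0 0 (-m)) (pt 0 0 m), by fun_prop,
    AffineMap.lineMap_apply_zero _ _, AffineMap.lineMap_apply_one _ _, ?_⟩, ?_⟩
  · rw [warpedLength_lineMap_vertical, sub_neg_eq_add, ← two_mul, abs_of_nonneg (by positivity)]
  · rintro _ ⟨γ, hγ, hγ₀, hγ₁, rfl⟩
    exact two_mul_sqrt_le_warpedLength hG hδ hGδ hk hGk hkm hγ
      (by simp [hγ₀, pt]) (by simp [hγ₀, pt]) (by simp [hγ₁, pt]) (by simp [hγ₁, pt])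

theorem eventually_warpedDist_vertical_eq (hG : Continuous G) (hδ : 0 < δ) (hGδ : ∀ y, δ ≤ G y)
    (hk : 0 ≤ k) (hGk : ∀ y, G 0 - k * y ^ 2 ≤ G y) :
    ∀ᶠ m in 𝓝[≥] 0, warpedDist G (pt 0 0 (-m)) (pt 0 0 m) = 2 * m * √(G 0) := by
  have hsmall : ∀ᶠ m in 𝓝 0, 44 * k * G 0 * m ^ 2 < δ :=
    (Continuous.tendsto' (by fun_prop) 0 0 (by simp)).eventually_lt_const hδ
  filter_upwards [nhdsWithin_le_nhds hsmall, self_mem_nhdsWithin] with m hkm hm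
  exact warpedDist_vertical_eq hG hδ hGδ hk hGk hm hkm.le

end Distance

theorem f_zero (A : ℝ) : f A 0 = 2 * A := by
  simp only [f, mul_zero, Real.cos_zero]
  ring

theorem min_le_one_add_f (A y : ℝ) : min 1 (1 + 2 * A) ≤ 1 + f A y := by
  have hlower := Real.neg_one_le_cos (π * y)
  have hupper := Real.cos_le_one (π * y)
  unfold f
  rcases le_total 0 A with hA | hA
  · exact min_le_of_left_le (by nlinarith)
  · exact min_le_of_right_le (by nlinarith)

theorem f_zero_sub_le (A y : ℝ) : f A 0 - |A| * π ^ 2 / 2 * y ^ 2 ≤ f A y := by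
  have hdrop : f A 0 - f A y ≤ |A| * (1 - Real.cos (π * y)) := by
    rw [f_zero, f]
    linarith [mul_le_mul_of_nonneg_right (le_abs_self A) (sub_nonneg.2 (Real.cos_le_one (π * y)))]
  have hcos : 1 - Real.cos (π * y) ≤ (π * y) ^ 2 / 2 := by
    linarith [Real.one_sub_sq_div_two_le_cos (x := π * y)]
  linarith [mul_le_mul_of_nonneg_left hcos (abs_nonneg A)]

theorem dg_uv_eq_for_small_eps_general (A : ℝ) (hA : -(1 / 2) < A) :
    ∃ ε₀ > (0 : ℝ), ∀ ε : ℝ, 0 < ε → ε < ε₀ →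
      dg A (pt 0 0 (-(a * ε))) (pt 0 0 (a * ε)) = 2 * a * ε * √(1 + f A 0) := by
  have hdist : ∀ᶠ m in 𝓝[≥] 0, dg A (pt 0 0 (-m)) (pt 0 0 m) = 2 * m * √(1 + f A 0) :=
    eventually_warpedDist_vertical_eq (G := fun y ↦ 1 + f A y) (k := |A| * π ^ 2 / 2)
      (by unfold f; fun_prop) (lt_min one_pos (by linarith)) (min_le_one_add_f A)
      (by positivity) (fun y ↦ by linarith [f_zero_sub_le A y])
  have ha : 0 ≤ a := by unfold a; positivity
  have hscale : Tendsto (fun ε ↦ a * ε) (𝓝[>] 0) (𝓝[≥] 0) :=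
    tendsto_nhdsWithin_iff.2 ⟨tendsto_nhdsWithin_of_tendsto_nhds
      (Continuous.tendsto' (by fun_prop) 0 0 (mul_zero a)),
      eventually_mem_nhdsWithin.mono fun ε hε ↦ mul_nonneg ha (le_of_lt hε)⟩
  obtain ⟨ε₀, hε₀, hsub⟩ := mem_nhdsGT_iff_exists_Ioo_subset.1 (hscale.eventually hdist)
  exact ⟨ε₀, hε₀, fun ε hpos hlt ↦ by rw [mul_assoc 2 a ε]; exact hsub ⟨hpos, hlt⟩⟩

/-- For sufficiently small `ε`, `d_g(v, u) = 2aε√(1 + f(0))`: the straight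
segment along the `z`-axis is a minimising path between `v` and `u`. -/
theorem dg_uv_eq_for_small_eps (A : ℝ) (hA0 : 0 < A) (hA : A ≤ 3 / 8) :
    ∃ ε₀ > (0:ℝ), ∀ ε : ℝ, 0 < ε → ε < ε₀ →
      dg A (pt 0 0 (-(a * ε))) (pt 0 0 (a * ε))
        = 2 * a * ε * Real.sqrt (1 + f A 0) := by
  exact dg_uv_eq_for_small_eps_general A (by linarith)
end
end
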